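/- arXiv:2507.06294 — 2 statements merged into one kernel-verified Lean document; each statement's English description precedes it below -/
import Mathlib

section
/- Let q be a complex number with 0 < |q| < 1. Then Σ_{m=0}^∞ (q^m/(q;q)_m) · Σ_{k=0}^{2m} [2m choose k]_q = ((q^3;q^3)_∞ / (q;q)_∞)^3. -/
/-!
The proof reduces both sides to the Lambert series
`Λ = ∑_{a≥0} (q^a/(1-q^{3a+1}) - q^{2a+1}/(1-q^{3a+2}))`.

*Left-hand side.* Put `B(M,i) = [2M choose M-i]_q / (q;q)_M`, so that the `m`-th summand is
`q^m (B(m,0) + 2 ∑_{i≥1} B(m,i))`. A `q`-Gosper certificate (`cBin_telescope`) gives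
`q^n (1-q^{n+1}) (B(M+1,n+1) - B(M,n+1)) = q^M (B(M,n) - q^{3n+3} B(M,n+2))`.
With the weights `E_n = ∑_{a+b=n} q^{3ab}`, which satisfy `E_{n+2} = 2 + q^{3n+3} E_n`, this makes
the partial sums explicit (`sum_lhsTerm`):
`∑_{m<M} (summand) = ∑_{n<M} q^n (1-q^{n+1}) E_n B(M,n+1)`.
Since `B(M,i) → 1/(q;q)_∞^2` boundedly, Tannery's theorem shows that the series equals
`(q;q)_∞^{-2} ∑_n q^n (1-q^{n+1}) E_n` (`tsum_lhsTerm`), and summing the double series over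
`(a,b)` by rows instead of antidiagonals turns the last sum into `Λ` (`tsum_weight_eq_lambert`).

*Lambert series.* With `Q = q^3`, Lagrange interpolation at the nodes `1, Q, …, Q^{2N}` gives the
partial fractions of `∏_{i<2N} (x - q Q^i) / ∏_{k≤2N} (x - Q^k)`. At `x = Q^N/q` the product
collapses, leaving a finite form of `Λ · (q;Q)_∞ (q^2;Q)_∞ / (Q;Q)_∞^2 = 1` (`finite_lambert`).
Letting `N → ∞` and using `(q;q)_∞ = (q;Q)_∞ (q^2;Q)_∞ (Q;Q)_∞` yields
`Λ = (Q;Q)_∞^3 / (q;q)_∞` (`lambert_eq`).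
-/

open Finset

/-- Finite q-Pochhammer symbol `(a;q)_n`. -/
noncomputable def qPoch (a q : ℂ) (n : ℕ) : ℂ := ∏ j ∈ Finset.range n, (1 - a * q ^ j)

/-- Infinite q-Pochhammer symbol `(a;q)_∞`. -/
noncomputable def qPochInf (a q : ℂ) : ℂ := ∏' j : ℕ, (1 - a * q ^ j)

/-- `1/(q;q)_a` with the convention that it is `0` for `a < 0`. -/
noncomputable def qFactInv (q : ℂ) (a : ℤ) : ℂ :=
  if 0 ≤ a then (qPoch q q a.toNat)⁻¹ else 0

/-- Gaussian binomial coefficient `[n choose k]_q`, zero unless `0 ≤ k ≤ n`. -/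
noncomputable def qBinom (q : ℂ) (n k : ℤ) : ℂ :=
  if 0 ≤ k ∧ k ≤ n then qPoch q q n.toNat * qFactInv q k * qFactInv q (n - k) else 0

open Filter Topology

/-! ### Convergence and bounds for `q`-Pochhammer symbols -/

lemma qPoch_succ (a q : ℂ) (n : ℕ) : qPoch a q (n + 1) = qPoch a q n * (1 - a * q ^ n) :=
  Finset.prod_range_succ _ _

lemma one_sub_ne_zero_of_norm_lt {x : ℂ} (hx : ‖x‖ < 1) : 1 - x ≠ 0 := by
  intro h
  rw [← sub_eq_zero.mp h] at hx
  simp at hx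

lemma norm_mul_pow_lt {a q : ℂ} (ha : ‖a‖ < 1) (hq : ‖q‖ < 1) (n : ℕ) : ‖a * q ^ n‖ < 1 := by
  rw [norm_mul, norm_pow]
  have h1 : ‖q‖ ^ n ≤ 1 := pow_le_one₀ (norm_nonneg _) hq.le
  nlinarith [norm_nonneg a]

lemma norm_pow_succ_lt {q : ℂ} (hq : ‖q‖ < 1) (n : ℕ) : ‖q ^ (n + 1)‖ < 1 := by
  rw [pow_succ']
  exact norm_mul_pow_lt hq hq n

lemma one_sub_pow_succ_ne_zero {q : ℂ} (hq : ‖q‖ < 1) (n : ℕ) : 1 - q ^ (n + 1) ≠ 0 :=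
  one_sub_ne_zero_of_norm_lt (norm_pow_succ_lt hq n)

lemma qPoch_ne_zero {a q : ℂ} (ha : ‖a‖ < 1) (hq : ‖q‖ < 1) (n : ℕ) : qPoch a q n ≠ 0 :=
  Finset.prod_ne_zero_iff.mpr fun j _ => one_sub_ne_zero_of_norm_lt (norm_mul_pow_lt ha hq j)

lemma summable_norm_mul_pow (a : ℂ) {q : ℂ} (hq : ‖q‖ < 1) :
    Summable fun j : ℕ => ‖-(a * q ^ j)‖ := by
  simp only [norm_neg, norm_mul, norm_pow]
  exact (summable_geometric_of_lt_one (norm_nonneg _) hq).mul_left _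

lemma tendsto_qPoch (a : ℂ) {q : ℂ} (hq : ‖q‖ < 1) :
    Tendsto (qPoch a q) atTop (𝓝 (qPochInf a q)) := by
  have h := (multipliable_one_add_of_summable (summable_norm_mul_pow a hq)).tendsto_prod_tprod_nat
  simp only [← sub_eq_add_neg] at h
  exact h

lemma qPochInf_ne_zero {a q : ℂ} (ha : ‖a‖ < 1) (hq : ‖q‖ < 1) : qPochInf a q ≠ 0 := by
  have h := tprod_one_add_ne_zero_of_summable (f := fun j : ℕ => -(a * q ^ j))
    (fun j => by
      rw [← sub_eq_add_neg]
      exact one_sub_ne_zero_of_norm_lt (norm_mul_pow_lt ha hq j))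
    (summable_norm_mul_pow a hq)
  simp only [← sub_eq_add_neg] at h
  exact h

lemma exists_bound_of_tendsto {u : ℕ → ℂ} {l : ℂ} (h : Tendsto u atTop (𝓝 l)) :
    ∃ C, ∀ n, ‖u n‖ ≤ C := by
  obtain ⟨C, hC⟩ := (Metric.isBounded_range_of_tendsto u h).exists_norm_le
  exact ⟨C, fun n => hC _ ⟨n, rfl⟩⟩

lemma exists_bound_qPoch (a : ℂ) {q : ℂ} (hq : ‖q‖ < 1) : ∃ C, ∀ n, ‖qPoch a q n‖ ≤ C :=
  exists_bound_of_tendsto (tendsto_qPoch a hq)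

lemma exists_bound_qPoch_inv {a q : ℂ} (ha : ‖a‖ < 1) (hq : ‖q‖ < 1) :
    ∃ C, ∀ n, ‖(qPoch a q n)⁻¹‖ ≤ C :=
  exists_bound_of_tendsto ((tendsto_qPoch a hq).inv₀ (qPochInf_ne_zero ha hq))

/-! ### A finite form of the left-hand side -/

/-- The central coefficients `[2M choose M - i]_q / (q;q)_M`, zero for `i > M`. -/
noncomputable def cBin (q : ℂ) (M i : ℕ) : ℂ :=
  if i ≤ M then qPoch q q (2 * M) / (qPoch q q M * qPoch q q (M - i) * qPoch q q (M + i)) else 0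

/-- The weights `E_n = ∑_{a + b = n} q^{3ab}`. -/
noncomputable def wE (q : ℂ) (n : ℕ) : ℂ :=
  ∑ p ∈ Finset.HasAntidiagonal.antidiagonal n, q ^ (3 * p.1 * p.2)

lemma cBin_eq_zero (q : ℂ) {M i : ℕ} (h : M < i) : cBin q M i = 0 := if_neg (by omega)

lemma cBin_add (q : ℂ) (i d : ℕ) : cBin q (i + d) i =
    qPoch q q (2 * (i + d)) / (qPoch q q (i + d) * qPoch q q d * qPoch q q (i + d + i)) := by
  rw [cBin, if_pos (by omega), Nat.add_sub_cancel_left]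

/-- The `q`-Gosper certificate: the right-hand side telescopes in `M`. -/
lemma cBin_telescope {q : ℂ} (hq : ‖q‖ < 1) (M n : ℕ) :
    q ^ n * (1 - q ^ (n + 1)) * (cBin q (M + 1) (n + 1) - cBin q M (n + 1)) =
      q ^ M * (cBin q M n - q ^ (3 * n + 3) * cBin q M (n + 2)) := by
  have hs : ∀ m, qPoch q q (m + 1) = qPoch q q m * (1 - q ^ (m + 1)) := fun m => by
    rw [qPoch_succ, pow_succ']
  have h0 : ∀ m, qPoch q q m ≠ 0 := qPoch_ne_zero hq hq
  have h1 : ∀ m, 1 - q ^ (m + 1) ≠ 0 := one_sub_pow_succ_ne_zero hq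
  rcases lt_trichotomy M n with h | h | h
  · rw [cBin_eq_zero q (by omega), cBin_eq_zero q (by omega), cBin_eq_zero q (by omega),
      cBin_eq_zero q (by omega)]
    ring
  · subst h
    have e1 := cBin_add q (M + 1) 0
    have e2 := cBin_add q M 0
    simp only [add_zero] at e1 e2
    rw [e1, e2, cBin_eq_zero q (show M < M + 1 by omega),
      cBin_eq_zero q (show M < M + 2 by omega),
      show 2 * (M + 1) = M + M + 1 + 1 by ring, show M + 1 + (M + 1) = M + M + 1 + 1 by ring,
      show 2 * M = M + M by ring, hs M]
    have a1 := h0 (M + M + 1 + 1)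
    have a2 := h0 (M + M)
    have a3 := h0 M
    have a4 := h1 M
    have a5 := h0 0
    field_simp
    ring
  · obtain ⟨d, rfl⟩ : ∃ d, M = n + 1 + d := ⟨M - (n + 1), by omega⟩
    have e1 := cBin_add q (n + 1) (d + 1)
    have e2 := cBin_add q (n + 1) d
    have e3 := cBin_add q n (d + 1)
    -- the coefficient at `n + 2`, in a form valid also at the edge `d = 0`
    have e4 : cBin q (n + 1 + d) (n + 2) = qPoch q q (2 * (n + 1 + d)) * (1 - q ^ d) /
        (qPoch q q (n + 1 + d) * qPoch q q d * qPoch q q (n + 1 + d + (n + 2))) := by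
      rcases d with _ | d
      · rw [cBin_eq_zero q (by omega)]
        simp
      · rw [show n + 1 + (d + 1) = n + 2 + d by ring, cBin_add, hs d]
        have := h0 (n + 2 + d)
        have := h0 d
        have := h1 d
        have := h0 (n + 2 + d + (n + 2))
        field_simp
    rw [show n + 1 + d + 1 = n + 1 + (d + 1) by ring, e1, e2, e4,
      show n + 1 + d = n + (d + 1) by ring, e3,
      show 2 * (n + 1 + (d + 1)) = 2 * (n + (d + 1)) + 1 + 1 by ring,
      show n + 1 + (d + 1) + (n + 1) = n + (d + 1) + n + 1 + 1 by ring,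
      show n + 1 + (d + 1) = n + (d + 1) + 1 by ring,
      show n + (d + 1) + (n + 1) = n + (d + 1) + n + 1 by ring,
      show n + (d + 1) + (n + 2) = n + (d + 1) + n + 1 + 1 by ring]
    simp only [hs]
    have a1 := h0 (2 * (n + (d + 1)))
    have a2 := h0 (n + (d + 1))
    have a2' := h0 (n + (d + 1) + n)
    have a3 := h0 d
    have a4 := h1 d
    have a5 := h1 (n + (d + 1))
    have a6 := h1 (n + (d + 1) + n)
    have a7 := h1 (n + (d + 1) + n + 1)
    field_simp
    ring

lemma wE_zero (q : ℂ) : wE q 0 = 1 := by simp [wE]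

lemma wE_one (q : ℂ) : wE q 1 = 2 := by
  simp [wE, Finset.Nat.antidiagonal_succ]
  norm_num

lemma wE_add_two (q : ℂ) (n : ℕ) : wE q (n + 2) = 2 + q ^ (3 * n + 3) * wE q n := by
  have key : ∑ p ∈ Finset.HasAntidiagonal.antidiagonal n, q ^ (3 * (p.1 + 1) * (p.2 + 1)) =
      q ^ (3 * n + 3) * wE q n := by
    rw [wE, Finset.mul_sum]
    refine Finset.sum_congr rfl fun p hp => ?_
    rw [← pow_add, ← Finset.HasAntidiagonal.mem_antidiagonal.mp hp]
    congr 1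
    ring
  rw [← key, wE, Finset.Nat.antidiagonal_succ_succ']
  simp
  ring

/-- Summation by parts against the recursion of `wE`; in the application the boundary terms
vanish. -/
lemma sum_wE (q : ℂ) (B : ℕ → ℂ) (K : ℕ) :
    ∑ n ∈ Finset.range K, wE q n * (B n - q ^ (3 * n + 3) * B (n + 2)) =
      B 0 + 2 * ∑ n ∈ Finset.range (K + 1), B (n + 1) - wE q K * B K
        - wE q (K + 1) * B (K + 1) := by
  induction K with
  | zero => simp [wE_zero, wE_one]
  | succ K ih =>
    rw [Finset.sum_range_succ, ih, Finset.sum_range_succ _ (K + 1), wE_add_two]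
    ring

lemma qBinom_eq {q : ℂ} (k l : ℕ) : qBinom q ((k + l : ℕ) : ℤ) (k : ℤ) =
    qPoch q q (k + l) / (qPoch q q k * qPoch q q l) := by
  have h : ((k + l : ℕ) : ℤ) - k = l := by push_cast; ring
  rw [qBinom, if_pos (by constructor <;> omega), h, qFactInv, qFactInv, if_pos (by omega),
    if_pos (by omega), Int.toNat_natCast, Int.toNat_natCast, Int.toNat_natCast]
  field_simp

/-- Grouping the indices `k = m ± i` of the inner sum by the symmetry of the Gaussian binomials. -/
lemma inner_qBinom_sum {q : ℂ} (hq : ‖q‖ < 1) (m : ℕ) :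
    (∑ k ∈ Finset.range (2 * m + 1), qBinom q (2 * (m : ℤ)) (k : ℤ)) / qPoch q q m =
      cBin q m 0 + 2 * ∑ n ∈ Finset.range m, cBin q m (n + 1) := by
  rw [show 2 * m + 1 = m + (1 + m) by ring, Finset.sum_range_add, Finset.sum_range_add,
    ← Finset.sum_range_reflect]
  have e1 : ∀ n ∈ Finset.range m, qBinom q (2 * (m : ℤ)) ((m - 1 - n : ℕ) : ℤ) =
      qPoch q q m * cBin q m (n + 1) := by
    intro n hn
    obtain ⟨d, rfl⟩ : ∃ d, m = n + 1 + d :=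
      ⟨m - (n + 1), by have := Finset.mem_range.mp hn; omega⟩
    have h := qBinom_eq (q := q) d (n + 1 + d + (n + 1))
    rw [show n + 1 + d - 1 - n = d by omega,
      show 2 * ((n + 1 + d : ℕ) : ℤ) = ((d + (n + 1 + d + (n + 1)) : ℕ) : ℤ) by push_cast; ring,
      h, cBin_add, show d + (n + 1 + d + (n + 1)) = 2 * (n + 1 + d) by ring]
    have := qPoch_ne_zero hq hq (n + 1 + d)
    field_simp
  have e2 : ∀ n ∈ Finset.range m, qBinom q (2 * (m : ℤ)) ((m + (1 + n) : ℕ) : ℤ) =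
      qPoch q q m * cBin q m (n + 1) := by
    intro n hn
    obtain ⟨d, rfl⟩ : ∃ d, m = n + 1 + d :=
      ⟨m - (n + 1), by have := Finset.mem_range.mp hn; omega⟩
    have h := qBinom_eq (q := q) (n + 1 + d + (1 + n)) d
    rw [show 2 * ((n + 1 + d : ℕ) : ℤ) = ((n + 1 + d + (1 + n) + d : ℕ) : ℤ) by push_cast; ring,
      h, cBin_add, show n + 1 + d + (1 + n) + d = 2 * (n + 1 + d) by ring, add_comm 1 n]
    have := qPoch_ne_zero hq hq (n + 1 + d)
    field_simp
  have e3 : qBinom q (2 * (m : ℤ)) (m : ℤ) = qPoch q q m * cBin q m 0 := by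
    have h := qBinom_eq (q := q) m m
    have h' := cBin_add q 0 m
    simp only [zero_add, add_zero] at h'
    rw [show 2 * (m : ℤ) = ((m + m : ℕ) : ℤ) by push_cast; ring, h, h', two_mul]
    have := qPoch_ne_zero hq hq m
    field_simp
  rw [Finset.sum_congr rfl e1, Finset.sum_congr rfl e2, Finset.sum_range_one, add_zero, e3,
    ← Finset.mul_sum]
  have := qPoch_ne_zero hq hq m
  field_simp
  ring

/-- The summand of the left-hand series. -/
noncomputable def lhsTerm (q : ℂ) (m : ℕ) : ℂ :=
  q ^ m / qPoch q q m * ∑ k ∈ Finset.range (2 * m + 1), qBinom q (2 * (m : ℤ)) (k : ℤ)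

lemma lhsTerm_eq {q : ℂ} (hq : ‖q‖ < 1) (m : ℕ) :
    lhsTerm q m = q ^ m * (cBin q m 0 + 2 * ∑ n ∈ Finset.range m, cBin q m (n + 1)) := by
  rw [← inner_qBinom_sum hq, lhsTerm]
  ring

/-- Closed form of the partial sums, by telescoping in `M`. -/
lemma sum_lhsTerm {q : ℂ} (hq : ‖q‖ < 1) (M : ℕ) :
    ∑ m ∈ Finset.range M, lhsTerm q m =
      ∑ n ∈ Finset.range M, q ^ n * (1 - q ^ (n + 1)) * wE q n * cBin q M (n + 1) := by
  induction M with
  | zero => simp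
  | succ M ih =>
    have hext : ∑ n ∈ Finset.range M, q ^ n * (1 - q ^ (n + 1)) * wE q n * cBin q M (n + 1) =
        ∑ n ∈ Finset.range (M + 1), q ^ n * (1 - q ^ (n + 1)) * wE q n * cBin q M (n + 1) := by
      rw [Finset.sum_range_succ, cBin_eq_zero q (Nat.lt_succ_self M), mul_zero, add_zero]
    have hstep := sum_wE q (cBin q M) (M + 1)
    rw [Finset.sum_range_succ (fun n => cBin q M (n + 1)) (M + 1),
      Finset.sum_range_succ (fun n => cBin q M (n + 1)) M,
      cBin_eq_zero q (show M < M + 1 by omega), cBin_eq_zero q (show M < M + 1 + 1 by omega)]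
      at hstep
    rw [Finset.sum_range_succ, ih, hext, lhsTerm_eq hq, eq_comm, ← sub_eq_iff_eq_add',
      ← Finset.sum_sub_distrib]
    have hterm : ∀ n, q ^ n * (1 - q ^ (n + 1)) * wE q n * cBin q (M + 1) (n + 1) -
        q ^ n * (1 - q ^ (n + 1)) * wE q n * cBin q M (n + 1) =
        q ^ M * (wE q n * (cBin q M n - q ^ (3 * n + 3) * cBin q M (n + 2))) := fun n => by
      linear_combination wE q n * cBin_telescope hq M n
    simp only [hterm]
    rw [← Finset.mul_sum, hstep]
    ring

/-! ### Passing to the limit on the left -/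

lemma exists_bound_cBin {q : ℂ} (hq : ‖q‖ < 1) : ∃ C, 0 ≤ C ∧ ∀ M i, ‖cBin q M i‖ ≤ C := by
  obtain ⟨A, hA⟩ := exists_bound_qPoch q hq
  obtain ⟨B, hB⟩ := exists_bound_qPoch_inv hq hq
  have hA0 : 0 ≤ A := (norm_nonneg _).trans (hA 0)
  have hB0 : 0 ≤ B := (norm_nonneg _).trans (hB 0)
  refine ⟨A * (B * B * B), by positivity, fun M i => ?_⟩
  rw [cBin]
  split_ifs
  · rw [div_eq_mul_inv, mul_inv, mul_inv, norm_mul, norm_mul, norm_mul]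
    gcongr <;> first | exact hA _ | exact hB _
  · rw [norm_zero]
    positivity

lemma tendsto_cBin {q : ℂ} (hq : ‖q‖ < 1) (i : ℕ) :
    Tendsto (fun M => cBin q M i) atTop (𝓝 ((qPochInf q q ^ 2)⁻¹)) := by
  have hP := tendsto_qPoch q hq
  have hP0 := qPochInf_ne_zero hq hq
  have h2 : Tendsto (fun M : ℕ => 2 * M) atTop atTop :=
    tendsto_atTop_mono (fun M => by simp only [id]; omega) tendsto_id
  have h := (hP.comp h2).div ((hP.mul (hP.comp (tendsto_sub_atTop_nat i))).mul
    (hP.comp (tendsto_add_atTop_nat i))) (by positivity)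
  have e : qPochInf q q / (qPochInf q q * qPochInf q q * qPochInf q q) =
      (qPochInf q q ^ 2)⁻¹ := by
    field_simp
  rw [e] at h
  refine h.congr' ?_
  filter_upwards [eventually_ge_atTop i] with M hM
  rw [cBin, if_pos hM]
  rfl

lemma norm_wE_le {q : ℂ} (hq : ‖q‖ < 1) (n : ℕ) : ‖wE q n‖ ≤ n + 1 := by
  refine (norm_sum_le _ _).trans ?_
  refine (Finset.sum_le_card_nsmul _ _ 1 fun p _ => ?_).trans ?_
  · rw [norm_pow]
    exact pow_le_one₀ (norm_nonneg _) hq.le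
  · simp

lemma summable_succ_mul_geometric {q : ℂ} (hq : ‖q‖ < 1) :
    Summable fun n : ℕ => ((n : ℝ) + 1) * ‖q‖ ^ n := by
  have h1 := summable_pow_mul_geometric_of_norm_lt_one (R := ℝ) 1 (r := ‖q‖) (by simpa using hq)
  have h2 := summable_geometric_of_lt_one (norm_nonneg q) hq
  refine (h1.add h2).congr fun n => ?_
  ring

lemma summable_lhsTerm {q : ℂ} (hq : ‖q‖ < 1) : Summable (lhsTerm q) := by
  obtain ⟨C, hC0, hC⟩ := exists_bound_cBin hq
  refine Summable.of_norm_bounded ((summable_succ_mul_geometric hq).mul_left (2 * C)) fun m => ?_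
  have hs : ‖∑ n ∈ Finset.range m, cBin q m (n + 1)‖ ≤ m * C := by
    refine (norm_sum_le _ _).trans ?_
    refine (Finset.sum_le_card_nsmul _ _ C fun n _ => hC _ _).trans ?_
    simp
  have ht : ‖cBin q m 0 + 2 * ∑ n ∈ Finset.range m, cBin q m (n + 1)‖ ≤ C + 2 * (m * C) := by
    refine (norm_add_le _ _).trans (add_le_add (hC _ _) ?_)
    rw [norm_mul, Complex.norm_ofNat]
    gcongr
  rw [lhsTerm_eq hq, norm_mul, norm_pow]
  have hr : 0 ≤ ‖q‖ ^ m := by positivity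
  nlinarith [mul_le_mul_of_nonneg_left ht hr, mul_nonneg hr hC0]

lemma norm_weight_le {q : ℂ} (hq : ‖q‖ < 1) (n : ℕ) :
    ‖q ^ n * (1 - q ^ (n + 1)) * wE q n‖ ≤ 2 * (((n : ℝ) + 1) * ‖q‖ ^ n) := by
  have h1 : ‖1 - q ^ (n + 1)‖ ≤ 2 := by
    refine (norm_sub_le _ _).trans ?_
    rw [norm_one]
    linarith [norm_pow_succ_lt hq n]
  rw [norm_mul, norm_mul, norm_pow]
  calc ‖q‖ ^ n * ‖1 - q ^ (n + 1)‖ * ‖wE q n‖ ≤ ‖q‖ ^ n * 2 * ((n : ℝ) + 1) := by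
        gcongr
        exact norm_wE_le hq n
    _ = _ := by ring

/-- Tannery's theorem in the form used below: bounded weights tending to a common limit. -/
lemma tendsto_weighted_sum {c : ℕ → ℂ} (hc : Summable fun n => ‖c n‖) {w : ℕ → ℕ → ℂ} {C : ℝ}
    (hC : ∀ N n, ‖w N n‖ ≤ C) {l : ℂ} (hw : ∀ n, Tendsto (fun N => w N n) atTop (𝓝 l))
    {s : ℕ → ℕ} (hs : Tendsto s atTop atTop) :
    Tendsto (fun N => ∑ n ∈ Finset.range (s N), c n * w N n) atTop (𝓝 ((∑' n, c n) * l)) := by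
  have hC0 : 0 ≤ C := (norm_nonneg _).trans (hC 0 0)
  rw [← tsum_mul_right]
  have h := tendsto_tsum_of_dominated_convergence (𝓕 := atTop)
    (f := fun N n => if n < s N then c n * w N n else 0) (g := fun n => c n * l)
    (hc.mul_right C) (fun n => ?_) (Eventually.of_forall fun N n => ?_)
  · refine h.congr fun N => ?_
    rw [tsum_eq_sum (s := Finset.range (s N)) fun n hn => if_neg (by simpa using hn)]
    exact Finset.sum_congr rfl fun n hn => if_pos (by simpa using hn)
  · refine ((hw n).const_mul (c n)).congr' ?_
    filter_upwards [hs.eventually_gt_atTop n] with N hN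
    rw [if_pos hN]
  · split_ifs
    · rw [norm_mul]
      exact mul_le_mul_of_nonneg_left (hC N n) (norm_nonneg _)
    · rw [norm_zero]
      positivity

lemma tsum_lhsTerm {q : ℂ} (hq : ‖q‖ < 1) :
    ∑' m, lhsTerm q m =
      (∑' n : ℕ, q ^ n * (1 - q ^ (n + 1)) * wE q n) * (qPochInf q q ^ 2)⁻¹ := by
  obtain ⟨C, -, hC⟩ := exists_bound_cBin hq
  have hlim := tendsto_weighted_sum (w := fun M n => cBin q M (n + 1))
    (Summable.of_nonneg_of_le (fun _ => norm_nonneg _) (norm_weight_le hq)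
      ((summable_succ_mul_geometric hq).mul_left 2))
    (fun M n => hC M (n + 1)) (fun n => tendsto_cBin hq (n + 1)) tendsto_id
  refine tendsto_nhds_unique (summable_lhsTerm hq).hasSum.tendsto_sum_nat (hlim.congr fun M => ?_)
  rw [sum_lhsTerm hq, id]

/-! ### The double series as a Lambert series -/

/-- Both sides sum `q^{a+b+3ab} - q^{2a+2b+1+3ab}` over `a, b ≥ 0`: the left along antidiagonals,
the right by rows, each a geometric series in `b`. -/
lemma tsum_weight_eq_lambert {q : ℂ} (hq : ‖q‖ < 1) :
    ∑' n : ℕ, q ^ n * (1 - q ^ (n + 1)) * wE q n =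
      ∑' a : ℕ, (q ^ a / (1 - q ^ (3 * a + 1)) - q ^ (2 * a + 1) / (1 - q ^ (3 * a + 2))) := by
  set f : ℕ × ℕ → ℂ := fun p => q ^ p.1 * (q ^ (3 * p.1 + 1)) ^ p.2
    - q ^ (2 * p.1 + 1) * (q ^ (3 * p.1 + 2)) ^ p.2 with hf
  have hg := summable_geometric_of_lt_one (norm_nonneg q) hq
  have hle : ∀ {i j : ℕ}, i ≤ j → ‖q‖ ^ j ≤ ‖q‖ ^ i := fun h =>
    pow_le_pow_of_le_one (norm_nonneg _) hq.le h
  have hsum : Summable f := by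
    refine Summable.of_norm_bounded ((hg.mul_of_nonneg hg (fun n => by positivity)
      (fun n => by positivity)).mul_left 2) fun p => ?_
    rw [hf]
    refine (norm_sub_le _ _).trans ?_
    rw [← pow_mul, ← pow_mul, ← pow_add, ← pow_add, norm_pow, norm_pow, ← pow_add,
      two_mul (‖q‖ ^ (p.1 + p.2))]
    have i1 : p.1 + p.2 ≤ p.1 + (3 * p.1 + 1) * p.2 := by nlinarith
    have i2 : p.1 + p.2 ≤ 2 * p.1 + 1 + (3 * p.1 + 2) * p.2 := by nlinarith
    exact add_le_add (hle i1) (hle i2)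
  have h1 : ∑' p, f p = ∑' n : ℕ, q ^ n * (1 - q ^ (n + 1)) * wE q n := by
    have hs' := (Finset.HasAntidiagonal.sigmaAntidiagonalEquivProd (A := ℕ)).summable_iff.mpr hsum
    rw [← (Finset.HasAntidiagonal.sigmaAntidiagonalEquivProd (A := ℕ)).tsum_eq f]
    refine (hs'.tsum_sigma' fun n => (hasSum_fintype _).summable).trans (tsum_congr fun n => ?_)
    rw [tsum_fintype, wE, Finset.mul_sum]
    refine (Finset.sum_coe_sort (Finset.HasAntidiagonal.antidiagonal n) f).trans
      (Finset.sum_congr rfl fun p hp => ?_)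
    rw [← Finset.HasAntidiagonal.mem_antidiagonal.mp hp, hf]
    ring
  rw [← h1, hsum.tsum_prod]
  refine tsum_congr fun a => ?_
  have g1 := hasSum_geometric_of_norm_lt_one (norm_pow_succ_lt hq (3 * a))
  have g2 := hasSum_geometric_of_norm_lt_one (norm_pow_succ_lt hq (3 * a + 1))
  exact ((g1.mul_left (q ^ a)).sub (g2.mul_left (q ^ (2 * a + 1)))).tsum_eq

/-! ### Partial fractions and the product form of the Lambert series -/

lemma prod_low {y : ℂ} (hy : y ≠ 0) (Q : ℂ) (k : ℕ) :
    ∏ i ∈ Finset.range k, (Q ^ k - y * Q ^ i) =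
      (-y) ^ k * (∏ i ∈ Finset.range k, Q ^ i) * qPoch (Q / y) Q k := by
  have hconst : (-y) ^ k = ∏ _i ∈ Finset.range k, (-y) := by simp
  rw [hconst, qPoch, ← Finset.prod_range_reflect (fun j => 1 - Q / y * Q ^ j) k,
    ← Finset.prod_mul_distrib, ← Finset.prod_mul_distrib]
  refine Finset.prod_congr rfl fun i hi => ?_
  have hk : Q ^ k = Q ^ i * (Q * Q ^ (k - 1 - i)) := by
    rw [← pow_succ', ← pow_add]
    congr 1
    have := Finset.mem_range.mp hi
    omega
  rw [hk]
  field_simp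
  ring

lemma prod_high (y Q : ℂ) (k l : ℕ) :
    ∏ i ∈ Finset.range l, (Q ^ k - y * Q ^ (k + i)) = (Q ^ k) ^ l * qPoch y Q l := by
  have hconst : (Q ^ k) ^ l = ∏ _i ∈ Finset.range l, Q ^ k := by simp
  rw [hconst, qPoch, ← Finset.prod_mul_distrib]
  refine Finset.prod_congr rfl fun i _ => ?_
  rw [pow_add]
  ring

lemma prod_erase_range (f : ℕ → ℂ) (k l : ℕ) :
    ∏ j ∈ (Finset.range (k + l + 1)).erase k, f j =
      (∏ j ∈ Finset.range k, f j) * ∏ j ∈ Finset.range l, f (k + (1 + j)) := by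
  set g : ℕ → ℂ := fun j => if j = k then 1 else f j with hg
  have h1 : ∏ j ∈ (Finset.range (k + l + 1)).erase k, f j =
      ∏ j ∈ (Finset.range (k + l + 1)).erase k, g j :=
    Finset.prod_congr rfl fun j hj => (if_neg (Finset.ne_of_mem_erase hj)).symm
  rw [h1, Finset.prod_erase _ (show g k = 1 from if_pos rfl), show k + l + 1 = k + (1 + l) by ring,
    Finset.prod_range_add, Finset.prod_range_add, Finset.prod_range_one]
  have h2 : ∏ j ∈ Finset.range k, g j = ∏ j ∈ Finset.range k, f j :=
    Finset.prod_congr rfl fun j hj => if_neg (by have := Finset.mem_range.mp hj; omega)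
  have h3 : ∏ j ∈ Finset.range l, g (k + (1 + j)) = ∏ j ∈ Finset.range l, f (k + (1 + j)) :=
    Finset.prod_congr rfl fun j _ => if_neg (by omega)
  rw [h2, h3]
  simp [hg]

/-- The partial fraction weights
`(q^2;q^3)_k (q;q^3)_l / ((q^3;q^3)_k (q^3;q^3)_l)`. -/
noncomputable def pfW (q : ℂ) (k l : ℕ) : ℂ :=
  qPoch (q ^ 2) (q ^ 3) k * qPoch q (q ^ 3) l /
    (qPoch (q ^ 3) (q ^ 3) k * qPoch (q ^ 3) (q ^ 3) l)

/-- Partial fractions, in `x`, of `∏_{i<L} (x - q Q^i) / ∏_{k≤L} (x - Q^k)` with `Q = q^3`. -/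
lemma partial_fractions {q : ℂ} (hq0 : q ≠ 0) (hq : ‖q‖ < 1) (L : ℕ) {x : ℂ}
    (hx : ∀ k ∈ Finset.range (L + 1), x ≠ (q ^ 3) ^ k) :
    ∑ k ∈ Finset.range (L + 1), q ^ k * pfW q k (L - k) * (x - (q ^ 3) ^ k)⁻¹ =
      (∏ i ∈ Finset.range L, (x - q * (q ^ 3) ^ i)) /
        ∏ k ∈ Finset.range (L + 1), (x - (q ^ 3) ^ k) := by
  set Q := q ^ 3 with hQ
  have hQ0 : Q ≠ 0 := pow_ne_zero _ hq0
  have hQ1 : ‖Q‖ < 1 := norm_pow_succ_lt hq 2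
  have hinj : Function.Injective fun k : ℕ => Q ^ k := by
    intro i j hij
    have h : ‖Q‖ ^ i = ‖Q‖ ^ j := by
      rw [← norm_pow, ← norm_pow]
      exact congrArg norm hij
    exact pow_right_injective₀ (norm_pos_iff.mpr hQ0) hQ1.ne h
  set f := Lagrange.nodal (Finset.range L) (fun i : ℕ => q * Q ^ i) with hf
  have hdeg : f.degree < (Finset.range (L + 1)).card := by
    rw [hf, Lagrange.degree_nodal, Finset.card_range, Finset.card_range]
    exact_mod_cast Nat.lt_succ_self L
  have hint := Lagrange.eq_interpolate (s := Finset.range (L + 1)) (v := fun k : ℕ => Q ^ k)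
    hinj.injOn hdeg
  have hev := congrArg (Polynomial.eval x) hint
  rw [Lagrange.eval_interpolate_not_at_node _ hx, hf, Lagrange.eval_nodal,
    Lagrange.eval_nodal] at hev
  have hne : ∏ k ∈ Finset.range (L + 1), (x - Q ^ k) ≠ 0 :=
    Finset.prod_ne_zero_iff.mpr fun k hk => sub_ne_zero.mpr (hx k hk)
  rw [eq_div_iff hne, mul_comm, hev]
  congr 1
  refine Finset.sum_congr rfl fun k hk => ?_
  obtain ⟨l, rfl⟩ : ∃ l, L = k + l := ⟨L - k, by have := Finset.mem_range.mp hk; omega⟩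
  rw [Lagrange.eval_nodal, Finset.prod_range_add, prod_low hq0, prod_high, Lagrange.nodalWeight,
    Finset.prod_inv_distrib, prod_erase_range, Nat.add_sub_cancel_left, pfW]
  have h1 := prod_low one_ne_zero Q k
  have h2 : ∏ j ∈ Finset.range l, (Q ^ k - Q ^ (k + (1 + j))) = (Q ^ k) ^ l * qPoch Q Q l := by
    rw [← prod_high]
    refine Finset.prod_congr rfl fun j _ => ?_
    rw [pow_add, pow_add, pow_add]
    ring
  simp only [one_mul, div_one] at h1
  have hdiv : Q / q = q ^ 2 := by
    rw [hQ]
    field_simp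
  rw [h1, h2, hdiv]
  have a1 := qPoch_ne_zero hQ1 hQ1 k
  have a2 := qPoch_ne_zero hQ1 hQ1 l
  have a3 : ∏ i ∈ Finset.range k, Q ^ i ≠ 0 :=
    Finset.prod_ne_zero_iff.mpr fun i _ => pow_ne_zero _ hQ0
  have a4 : (Q ^ k) ^ l ≠ 0 := pow_ne_zero _ (pow_ne_zero _ hQ0)
  have a5 : (-1 : ℂ) ^ k ≠ 0 := pow_ne_zero _ (by norm_num)
  have a6 : x - Q ^ k ≠ 0 := sub_ne_zero.mpr (hx k hk)
  have a7 : (-q) ^ k = (-1) ^ k * q ^ k := by rw [← mul_pow]; ring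
  rw [← hQ, a7]
  generalize (Q ^ k) ^ l = t1 at *
  generalize ∏ i ∈ Finset.range k, Q ^ i = t2 at *
  field_simp

/-- `partial_fractions` at the symmetric point `x = q^{3N-1}`, `L = 2N`, where the product on the
right collapses. -/
lemma finite_lambert {q : ℂ} (hq0 : q ≠ 0) (hq : ‖q‖ < 1) (N : ℕ) :
    ∑ n ∈ Finset.range (N + 1), q ^ n / (1 - q ^ (3 * n + 1)) * pfW q (N + n) (N - n) -
      ∑ m ∈ Finset.range N,
        q ^ (2 * m + 1) / (1 - q ^ (3 * m + 2)) * pfW q (N - 1 - m) (N + 1 + m) =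
      (1 - q ^ (3 * N + 1))⁻¹ := by
  set Q := q ^ 3 with hQ
  have hQ0 : Q ≠ 0 := pow_ne_zero _ hq0
  have hQ1 : ‖Q‖ < 1 := norm_pow_succ_lt hq 2
  have hq2 : ‖q ^ 2‖ < 1 := norm_pow_succ_lt hq 1
  have u1 : ∀ n, 1 - q ^ (3 * n + 1) ≠ 0 := fun n => one_sub_pow_succ_ne_zero hq _
  have u2 : ∀ n, 1 - q ^ (3 * n + 2) ≠ 0 := fun n => one_sub_pow_succ_ne_zero hq (3 * n + 1)
  have hhigh : ∀ n, Q ^ N / q - Q ^ (N + n) = Q ^ N / q * (1 - q ^ (3 * n + 1)) := fun n => by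
    rw [pow_add, show q ^ (3 * n + 1) = q * Q ^ n by rw [hQ]; ring]
    field_simp
  have hlow : ∀ m < N, Q ^ N / q - Q ^ (N - 1 - m) =
      -(Q ^ (N - 1 - m) * (1 - q ^ (3 * m + 2))) := fun m hm => by
    have e : Q ^ N = Q ^ (N - 1 - m) * (q ^ (3 * m + 2) * q) := by
      rw [← pow_succ, hQ, ← pow_mul, ← pow_mul, ← pow_add]
      congr 1
      omega
    rw [e]
    field_simp
    ring
  have hx : ∀ k ∈ Finset.range (2 * N + 1), Q ^ N / q ≠ Q ^ k := fun k hk => by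
    rw [← sub_ne_zero]
    rcases lt_or_ge k N with h | h
    · have := hlow (N - 1 - k) (by omega)
      rw [show N - 1 - (N - 1 - k) = k by omega] at this
      rw [this]
      exact neg_ne_zero.mpr (mul_ne_zero (pow_ne_zero _ hQ0) (u2 _))
    · obtain ⟨n, rfl⟩ := Nat.exists_eq_add_of_le h
      rw [hhigh]
      exact mul_ne_zero (div_ne_zero (pow_ne_zero _ hQ0) hq0) (u1 _)
  have main := partial_fractions hq0 hq (2 * N) hx
  rw [← hQ] at main
  -- the factors `(q;Q)_N`, `(q^2;Q)_N` cancel, leaving only the last factor of `(q;Q)_{N+1}`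
  have hr : (∏ i ∈ Finset.range (2 * N), (Q ^ N / q - q * Q ^ i)) /
      ∏ k ∈ Finset.range (2 * N + 1), (Q ^ N / q - Q ^ k) =
      q ^ (N + 1) / Q ^ N * (1 - q ^ (3 * N + 1))⁻¹ := by
    have n1 : ∏ i ∈ Finset.range (2 * N), (Q ^ N / q - q * Q ^ i) =
        (q⁻¹) ^ (2 * N) * ((-(q ^ 2)) ^ N * (∏ i ∈ Finset.range N, Q ^ i) * qPoch q Q N *
          ((Q ^ N) ^ N * qPoch (q ^ 2) Q N)) := by
      have hd : Q / q ^ 2 = q := by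
        rw [hQ]
        field_simp
      have hl := prod_low (pow_ne_zero 2 hq0) Q N
      rw [hd] at hl
      have hc : (q⁻¹) ^ (2 * N) = ∏ _i ∈ Finset.range (2 * N), q⁻¹ := by simp
      rw [← hl, ← prod_high, ← Finset.prod_range_add (fun i => Q ^ N - q ^ 2 * Q ^ i), ← two_mul,
        hc, ← Finset.prod_mul_distrib]
      refine Finset.prod_congr rfl fun i _ => ?_
      field_simp
    have n2 : ∏ k ∈ Finset.range (2 * N + 1), (Q ^ N / q - Q ^ k) =
        (q⁻¹) ^ (2 * N + 1) * ((-q) ^ N * (∏ i ∈ Finset.range N, Q ^ i) * qPoch (q ^ 2) Q N *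
          ((Q ^ N) ^ (N + 1) * qPoch q Q (N + 1))) := by
      have hd : Q / q = q ^ 2 := by
        rw [hQ]
        field_simp
      have hl := prod_low hq0 Q N
      rw [hd] at hl
      have hc : (q⁻¹) ^ (2 * N + 1) = ∏ _i ∈ Finset.range (2 * N + 1), q⁻¹ := by simp
      rw [← hl, ← prod_high, ← Finset.prod_range_add (fun i => Q ^ N - q * Q ^ i), ← add_assoc,
        ← two_mul, hc, ← Finset.prod_mul_distrib]
      refine Finset.prod_congr rfl fun i _ => ?_
      field_simp
    have hlast : 1 - q * Q ^ N = 1 - q ^ (3 * N + 1) := by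
      rw [hQ]
      ring
    rw [n1, n2, qPoch_succ, hlast]
    have a1 := qPoch_ne_zero hq hQ1 N
    have a2 := qPoch_ne_zero hq2 hQ1 N
    have a3 : ∏ i ∈ Finset.range N, Q ^ i ≠ 0 :=
      Finset.prod_ne_zero_iff.mpr fun i _ => pow_ne_zero _ hQ0
    have a4 : Q ^ N ≠ 0 := pow_ne_zero _ hQ0
    have a5 : (-1 : ℂ) ^ N ≠ 0 := pow_ne_zero _ (by norm_num)
    have a7 : (-q) ^ N = (-1) ^ N * q ^ N := by rw [← mul_pow]; ring
    have a8 : (-(q ^ 2)) ^ N = (-1) ^ N * (q ^ N * q ^ N) := by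
      rw [← mul_pow, ← mul_pow]
      ring
    have a9 := u1 N
    rw [a7, a8]
    generalize ∏ i ∈ Finset.range N, Q ^ i = t2 at *
    generalize Q ^ N = t1 at *
    rw [pow_succ q⁻¹, pow_succ t1]
    field_simp
    try ring
  rw [hr, show 2 * N + 1 = N + (N + 1) by ring, Finset.sum_range_add,
    ← Finset.sum_range_reflect] at main
  have hc : q ^ (N + 1) / Q ^ N ≠ 0 := div_ne_zero (pow_ne_zero _ hq0) (pow_ne_zero _ hQ0)
  refine mul_left_cancel₀ hc (Eq.trans ?_ main)
  rw [mul_sub, sub_eq_neg_add, Finset.mul_sum, Finset.mul_sum, ← Finset.sum_neg_distrib]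
  congr 1
  · refine Finset.sum_congr rfl fun m hm => ?_
    have hm' := Finset.mem_range.mp hm
    rw [hlow m hm', show 2 * N - (N - 1 - m) = N + 1 + m by omega]
    obtain ⟨d, rfl⟩ : ∃ d, N = d + 1 + m := ⟨N - 1 - m, by omega⟩
    rw [show d + 1 + m - 1 - m = d by omega]
    have b1 := u2 m
    have b2 : Q ^ d ≠ 0 := pow_ne_zero _ hQ0
    have b3 : Q ^ (d + 1 + m) = Q ^ d * q ^ (3 * m + 3) := by
      rw [hQ, ← pow_mul, ← pow_mul, ← pow_add]
      congr 1
      ring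
    have b4 : q ^ (d + 1 + m + 1) * q ^ (2 * m + 1) = q ^ d * q ^ (3 * m + 3) := by
      rw [← pow_add, ← pow_add]
      congr 1
      ring
    have b5 : q ^ (3 * m + 3) ≠ 0 := pow_ne_zero _ hq0
    rw [b3]
    generalize pfW q _ _ = w
    generalize Q ^ d = t1 at *
    rw [inv_neg, mul_neg, neg_inj]
    calc _ = (q ^ (d + 1 + m + 1) * q ^ (2 * m + 1)) *
          (w / (t1 * q ^ (3 * m + 3) * (1 - q ^ (3 * m + 2)))) := by field_simp
      _ = _ := by
        rw [b4]
        field_simp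
  · refine Finset.sum_congr rfl fun n hn => ?_
    rw [hhigh, show 2 * N - (N + n) = N - n by omega, pow_add q N n]
    have b1 := u1 n
    have b2 : Q ^ N ≠ 0 := pow_ne_zero _ hQ0
    generalize pfW q _ _ = w
    generalize Q ^ N = t1 at *
    field_simp
    try ring

lemma exists_bound_pfW {q : ℂ} (hq : ‖q‖ < 1) : ∃ C, ∀ k l, ‖pfW q k l‖ ≤ C := by
  have hQ : ‖q ^ 3‖ < 1 := norm_pow_succ_lt hq 2
  obtain ⟨A, hA⟩ := exists_bound_qPoch (q ^ 2) hQ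
  obtain ⟨A', hA'⟩ := exists_bound_qPoch q hQ
  obtain ⟨B, hB⟩ := exists_bound_qPoch_inv hQ hQ
  have hA0 : 0 ≤ A := (norm_nonneg _).trans (hA 0)
  have hA0' : 0 ≤ A' := (norm_nonneg _).trans (hA' 0)
  have hB0 : 0 ≤ B := (norm_nonneg _).trans (hB 0)
  refine ⟨A * A' * (B * B), fun k l => ?_⟩
  rw [pfW, div_eq_mul_inv, mul_inv, norm_mul, norm_mul, norm_mul]
  gcongr <;> first | exact hA _ | exact hA' _ | exact hB _

lemma tendsto_pfW {q : ℂ} (hq : ‖q‖ < 1) {s t : ℕ → ℕ} (hs : Tendsto s atTop atTop)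
    (ht : Tendsto t atTop atTop) :
    Tendsto (fun N => pfW q (s N) (t N)) atTop
      (𝓝 (qPochInf (q ^ 2) (q ^ 3) * qPochInf q (q ^ 3) / qPochInf (q ^ 3) (q ^ 3) ^ 2)) := by
  have hQ : ‖q ^ 3‖ < 1 := norm_pow_succ_lt hq 2
  have h0 := qPochInf_ne_zero hQ hQ
  have h3 := tendsto_qPoch (q ^ 3) hQ
  rw [sq (qPochInf (q ^ 3) (q ^ 3))]
  exact (((tendsto_qPoch (q ^ 2) hQ).comp hs).mul ((tendsto_qPoch q hQ).comp ht)).div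
    ((h3.comp hs).mul (h3.comp ht)) (mul_ne_zero h0 h0)

/-- `(q;q)_∞ = (q;q^3)_∞ (q^2;q^3)_∞ (q^3;q^3)_∞`. -/
lemma qPochInf_trisect {q : ℂ} (hq : ‖q‖ < 1) : qPochInf q q =
    qPochInf q (q ^ 3) * qPochInf (q ^ 2) (q ^ 3) * qPochInf (q ^ 3) (q ^ 3) := by
  have hQ : ‖q ^ 3‖ < 1 := norm_pow_succ_lt hq 2
  have hfin : ∀ N, qPoch q q (3 * N) =
      qPoch q (q ^ 3) N * qPoch (q ^ 2) (q ^ 3) N * qPoch (q ^ 3) (q ^ 3) N := by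
    intro N
    induction N with
    | zero => simp [qPoch]
    | succ N ih =>
      rw [show 3 * (N + 1) = 3 * N + 1 + 1 + 1 by ring]
      simp only [qPoch_succ, ih]
      ring
  have h3 : Tendsto (fun N : ℕ => 3 * N) atTop atTop :=
    tendsto_atTop_mono (fun M => by simp only [id]; omega) tendsto_id
  exact tendsto_nhds_unique ((tendsto_qPoch q hq).comp h3)
    ((((tendsto_qPoch q hQ).mul (tendsto_qPoch (q ^ 2) hQ)).mul
      (tendsto_qPoch (q ^ 3) hQ)).congr fun N => (hfin N).symm)

lemma norm_inv_one_sub_pow_le {q : ℂ} (hq : ‖q‖ < 1) (n : ℕ) :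
    ‖(1 - q ^ (n + 1))⁻¹‖ ≤ (1 - ‖q‖)⁻¹ := by
  rw [norm_inv]
  have h1 : ‖q ^ (n + 1)‖ ≤ ‖q‖ := by
    rw [norm_pow]
    exact pow_le_of_le_one (norm_nonneg _) hq.le (Nat.succ_ne_zero n)
  have h2 := norm_sub_norm_le (1 : ℂ) (q ^ (n + 1))
  rw [norm_one] at h2
  exact inv_anti₀ (by linarith) (by linarith)

/-- `∑_a (q^a/(1-q^{3a+1}) - q^{2a+1}/(1-q^{3a+2})) = (q^3;q^3)_∞^3 / (q;q)_∞`. -/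
lemma lambert_eq {q : ℂ} (hq0 : q ≠ 0) (hq : ‖q‖ < 1) :
    ∑' a : ℕ, (q ^ a / (1 - q ^ (3 * a + 1)) - q ^ (2 * a + 1) / (1 - q ^ (3 * a + 2))) =
      qPochInf (q ^ 3) (q ^ 3) ^ 3 / qPochInf q q := by
  have hQ : ‖q ^ 3‖ < 1 := norm_pow_succ_lt hq 2
  have hgeo := (summable_geometric_of_lt_one (norm_nonneg q) hq).mul_right (1 - ‖q‖)⁻¹
  have hpos : 0 ≤ (1 - ‖q‖)⁻¹ := inv_nonneg.mpr (by linarith)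
  have s1 : Summable fun a : ℕ => ‖q ^ a / (1 - q ^ (3 * a + 1))‖ := by
    refine Summable.of_nonneg_of_le (fun _ => norm_nonneg _) (fun a => ?_) hgeo
    rw [div_eq_mul_inv, norm_mul, norm_pow]
    exact mul_le_mul_of_nonneg_left (norm_inv_one_sub_pow_le hq _) (by positivity)
  have s2 : Summable fun a : ℕ => ‖q ^ (2 * a + 1) / (1 - q ^ (3 * a + 2))‖ := by
    refine Summable.of_nonneg_of_le (fun _ => norm_nonneg _) (fun a => ?_) hgeo
    rw [div_eq_mul_inv, norm_mul, norm_pow]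
    exact mul_le_mul (pow_le_pow_of_le_one (norm_nonneg _) hq.le (by omega))
      (norm_inv_one_sub_pow_le hq (3 * a + 1)) (norm_nonneg _) (by positivity)
  obtain ⟨C, hC⟩ := exists_bound_pfW hq
  have up : ∀ n, Tendsto (fun N : ℕ => N + n) atTop atTop := tendsto_add_atTop_nat
  have down : ∀ n, Tendsto (fun N : ℕ => N - n) atTop atTop := tendsto_sub_atTop_nat
  have t1 := tendsto_weighted_sum s1 (w := fun N n => pfW q (N + n) (N - n))
    (fun _ _ => hC _ _) (fun n => tendsto_pfW hq (up n) (down n)) (up 1)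
  have t2 := tendsto_weighted_sum s2 (w := fun N m => pfW q (N - 1 - m) (N + 1 + m))
    (fun _ _ => hC _ _)
    (fun m => tendsto_pfW hq ((down m).comp (down 1)) ((up m).comp (up 1))) tendsto_id
  have t3 : Tendsto (fun N : ℕ => (1 - q ^ (3 * N + 1))⁻¹) atTop (𝓝 1) := by
    have e : Tendsto (fun N : ℕ => 3 * N + 1) atTop atTop :=
      tendsto_atTop_mono (fun M => by simp only [id]; omega) tendsto_id
    have h := ((tendsto_pow_atTop_nhds_zero_of_norm_lt_one hq).comp e).const_sub 1
    rw [sub_zero] at h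
    simpa using h.inv₀ one_ne_zero
  have key := tendsto_nhds_unique ((t1.sub t2).congr fun N => finite_lambert hq0 hq N) t3
  rw [← sub_mul, ← s1.of_norm.tsum_sub s2.of_norm] at key
  have c1 := qPochInf_ne_zero hq hQ
  have c2 := qPochInf_ne_zero (norm_pow_succ_lt hq 1) hQ
  have c3 := qPochInf_ne_zero hQ hQ
  simp only [Nat.reduceAdd] at c2
  rw [qPochInf_trisect hq]
  rw [← eq_div_iff (div_ne_zero (mul_ne_zero c2 c1) (pow_ne_zero 2 c3))] at key
  rw [key]
  field_simp

/-- `Σ_{m≥0} (q^m/(q;q)_m) Σ_{k=0}^{2m} [2m choose k]_q = ((q^3;q^3)_∞/(q;q)_∞)^3`. -/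
theorem statement2 (q : ℂ) (hq0 : 0 < ‖q‖) (hq1 : ‖q‖ < 1) :
    ∑' m : ℕ, q ^ m / qPoch q q m *
        ∑ k ∈ Finset.range (2 * m + 1), qBinom q (2 * (m : ℤ)) (k : ℤ)
      = (qPochInf (q ^ 3) (q ^ 3) / qPochInf q q) ^ 3 := by
  have h := tsum_lhsTerm hq1
  rw [tsum_weight_eq_lambert hq1, lambert_eq (norm_pos_iff.mp hq0) hq1] at h
  refine Eq.trans h ?_
  have := qPochInf_ne_zero hq1 hq1
  field_simp
end

section
/- Let q and z be complex numbers with 0 < |q| < 1, z ≠ 0, and z^{±1} ≠ q^{2j+1} for every integer j ≥ 0. Then 1/((zq;q^2)_∞ · (q/z;q^2)_∞ · (q;q^2)_∞) = (1/((q;q)_∞ (q^2;q^2)_∞)) · Σ_{n=0}^∞ (−1)^n q^{n^2+n} · (1 − q^{4n+2}) / ((1 − z q^{2n+1})(1 − z^{−1} q^{2n+1})), with the series on the right converging absolutely. -/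
/-!
Write `Q = q²` and `xₙ = q^(2n+1)`. Each factor `(1 - z xₙ)(1 - z⁻¹ xₙ) = 1 + xₙ² - xₙ (z + z⁻¹)` is
linear in `z + z⁻¹`, so the finite product `∏_{n<N} 1/((1 - z xₙ)(1 - z⁻¹ xₙ))` has an explicit
partial fraction expansion
`∑_{n<N} (-1)^n q^(n²+n) (1 - q^(4n+2)) / ((1 - z xₙ)(1 - z⁻¹ xₙ)) · 1/((Q;Q)_{N+n} (Q;Q)_{N-1-n})`
(`partial_fractions`). It is proved by induction on `N`; what the inductive step leaves over is a
sum independent of `z`, which telescopes to zero (`sum_aux_eq_zero`).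

As `N → ∞` the weight `1/((Q;Q)_{N+n} (Q;Q)_{N-1-n})` is bounded and tends to `1/(Q;Q)_∞²`, so
dominated convergence for series gives
`1/((zq;Q)_∞ (q/z;Q)_∞) = (Q;Q)_∞⁻² ∑ …`. The claim follows from `(q;q)_∞ = (q;Q)_∞ (Q;Q)_∞`.
-/

open Finset

open Filter Topology

/-- The finite q-Pochhammer symbol `(q²;q²)_m`. -/
noncomputable def qqPoch (q : ℂ) (m : ℕ) : ℂ := ∏ j ∈ range m, (1 - q ^ 2 * (q ^ 2) ^ j)

lemma qqPoch_succ (q : ℂ) (m : ℕ) :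
    qqPoch q (m + 1) = qqPoch q m * (1 - q ^ (2 * m + 2)) := by
  rw [qqPoch, prod_range_succ, ← qqPoch]
  ring

lemma one_sub_pow_ne_zero {q : ℂ} (hq1 : ‖q‖ < 1) {m : ℕ} (hm : m ≠ 0) : 1 - q ^ m ≠ 0 := by
  intro h
  have h1 : ‖q ^ m‖ = 1 := by rw [← sub_eq_zero.mp h, norm_one]
  rw [norm_pow] at h1
  exact (pow_lt_one₀ (norm_nonneg q) hq1 hm).ne h1

lemma qqPoch_ne_zero {q : ℂ} (hq1 : ‖q‖ < 1) (m : ℕ) : qqPoch q m ≠ 0 := by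
  induction m with
  | zero => simp [qqPoch]
  | succ m ih =>
    rw [qqPoch_succ]
    exact mul_ne_zero ih (one_sub_pow_ne_zero hq1 (by omega))

/-- Partial sums of the `z`-free remainder sum, in closed form. The exponent `n * (n - 1)` is
`0` at `n = 0`, so the truncated subtraction is harmless. -/
lemma sum_aux_partial {q : ℂ} (hq1 : ‖q‖ < 1) (N M : ℕ) (hM : M < N) :
    ∑ n ∈ range (M + 1), (-1 : ℂ) ^ n * q ^ (n * (n - 1)) * (1 - q ^ (4 * n + 2)) /
        (qqPoch q (N + 1 + n) * qqPoch q (N - n))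
      = (-1 : ℂ) ^ M * q ^ (M * (M + 1)) * (1 - q ^ (2 * M + 2)) /
        ((1 - q ^ (2 * N)) * (qqPoch q (N + 1 + M) * qqPoch q (N - 1 - M))) := by
  induction M with
  | zero =>
    obtain ⟨k, rfl⟩ : ∃ k, N = k + 1 := ⟨N - 1, by omega⟩
    have h1 := qqPoch_ne_zero hq1 k
    have h2 := qqPoch_ne_zero hq1 (k + 1 + 1)
    have h3 := one_sub_pow_ne_zero hq1 (m := 2 * k + 2) (by omega)
    have h4 : 2 * (k + 1) = 2 * k + 2 := by ring
    simp only [zero_add, sum_range_one, pow_zero, Nat.zero_mul, Nat.mul_zero, add_zero,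
      Nat.sub_zero, Nat.add_sub_cancel, h4]
    rw [qqPoch_succ q k]
    field_simp
  | succ M ih =>
    obtain ⟨k, rfl⟩ : ∃ k, N = M + 2 + k := ⟨N - M - 2, by omega⟩
    rw [sum_range_succ, ih (by omega)]
    have e1 : M + 2 + k - 1 - M = k + 1 := by omega
    have e2 : M + 2 + k - (M + 1) = k + 1 := by omega
    have e3 : M + 2 + k - 1 - (M + 1) = k := by omega
    have e4 : M + 2 + k + 1 + (M + 1) = (M + 2 + k + 1 + M) + 1 := by ring
    rw [e1, e2, e3, e4, qqPoch_succ q k, qqPoch_succ q (M + 2 + k + 1 + M), Nat.add_sub_cancel]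
    have h1 := qqPoch_ne_zero hq1 k
    have h2 := qqPoch_ne_zero hq1 (M + 2 + k + 1 + M)
    have h3 := one_sub_pow_ne_zero hq1 (m := 2 * k + 2) (by omega)
    have h4 := one_sub_pow_ne_zero hq1 (m := 2 * (M + 2 + k + 1 + M) + 2) (by omega)
    have h5 := one_sub_pow_ne_zero hq1 (m := 2 * (M + 2 + k)) (by omega)
    generalize qqPoch q k = B at *
    generalize qqPoch q (M + 2 + k + 1 + M) = A at *
    rw [div_add_div _ _ (by simp [*]) (by simp [*]), div_eq_div_iff (by simp [*]) (by simp [*])]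
    ring

lemma sum_aux_eq_zero {q : ℂ} (hq1 : ‖q‖ < 1) (N : ℕ) (hN : 0 < N) :
    ∑ n ∈ range (N + 1), (-1 : ℂ) ^ n * q ^ (n * (n - 1)) * (1 - q ^ (4 * n + 2)) /
        (qqPoch q (N + 1 + n) * qqPoch q (N - n)) = 0 := by
  obtain ⟨k, rfl⟩ : ∃ k, N = k + 1 := ⟨N - 1, by omega⟩
  rw [sum_range_succ, sum_aux_partial hq1 (k + 1) k (by omega)]
  have e1 : k + 1 - 1 - k = 0 := by omega
  have e4 : k + 1 + 1 + (k + 1) = (k + 1 + 1 + k) + 1 := by ring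
  rw [e1, Nat.sub_self, e4, qqPoch_succ q (k + 1 + 1 + k), Nat.add_sub_cancel]
  have h1 := qqPoch_ne_zero hq1 0
  have h2 := qqPoch_ne_zero hq1 (k + 1 + 1 + k)
  have h4 := one_sub_pow_ne_zero hq1 (m := 2 * (k + 1 + 1 + k) + 2) (by omega)
  have h5 := one_sub_pow_ne_zero hq1 (m := 2 * (k + 1)) (by omega)
  generalize qqPoch q 0 = B at *
  generalize qqPoch q (k + 1 + 1 + k) = A at *
  rw [div_add_div _ _ (by simp [*]) (by simp [*]), div_eq_zero_iff]
  left
  ring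

/-- Partial fraction expansion in `z + z⁻¹` of the reciprocal of the truncated product. -/
lemma partial_fractions_s4 {q z : ℂ} (hq1 : ‖q‖ < 1) (hz : z ≠ 0)
    (hE : ∀ n : ℕ, (1 - z * q ^ (2 * n + 1)) * (1 - z⁻¹ * q ^ (2 * n + 1)) ≠ 0) (N : ℕ) :
    ∑ n ∈ range (N + 1), (-1 : ℂ) ^ n * q ^ (n ^ 2 + n) * (1 - q ^ (4 * n + 2)) /
        ((1 - z * q ^ (2 * n + 1)) * (1 - z⁻¹ * q ^ (2 * n + 1))) *
        (qqPoch q (N + 1 + n) * qqPoch q (N - n))⁻¹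
      = (∏ n ∈ range (N + 1),
          ((1 - z * q ^ (2 * n + 1)) * (1 - z⁻¹ * q ^ (2 * n + 1))))⁻¹ := by
  induction N with
  | zero =>
    have h := one_sub_pow_ne_zero hq1 (m := 2) (by omega)
    simp [qqPoch, h, div_eq_mul_inv, mul_comm, mul_left_comm, mul_assoc]
  | succ N ih =>
    rw [prod_range_succ, mul_inv, ← ih, eq_mul_inv_iff_mul_eq₀ (hE (N + 1)), sum_mul]
    -- The factor at `x_{N+1}` is a combination of the factor at `xₙ` and of the two factors by
    -- which the weights for `N` and `N + 1` differ.
    have key : ∀ n ∈ range (N + 1),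
        (-1 : ℂ) ^ n * q ^ (n ^ 2 + n) * (1 - q ^ (4 * n + 2)) /
          ((1 - z * q ^ (2 * n + 1)) * (1 - z⁻¹ * q ^ (2 * n + 1))) *
          (qqPoch q (N + 1 + 1 + n) * qqPoch q (N + 1 - n))⁻¹ *
          ((1 - z * q ^ (2 * (N + 1) + 1)) * (1 - z⁻¹ * q ^ (2 * (N + 1) + 1)))
        = (-1 : ℂ) ^ n * q ^ (n ^ 2 + n) * (1 - q ^ (4 * n + 2)) /
          ((1 - z * q ^ (2 * n + 1)) * (1 - z⁻¹ * q ^ (2 * n + 1))) *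
          (qqPoch q (N + 1 + n) * qqPoch q (N - n))⁻¹
          + q ^ (2 * (N + 1)) * ((-1 : ℂ) ^ n * q ^ (n * (n - 1)) * (1 - q ^ (4 * n + 2)) /
            (qqPoch q (N + 1 + 1 + n) * qqPoch q (N + 1 - n))) := by
      intro n hn
      obtain ⟨k, rfl⟩ : ∃ k, N = n + k := ⟨N - n, by have := mem_range.mp hn; omega⟩
      have e1 : n + k - n = k := by omega
      have e2 : n + k + 1 - n = k + 1 := by omega
      have e3 : n + k + 1 + 1 + n = (n + k + 1 + n) + 1 := by ring
      have e4 : q ^ (n ^ 2 + n) = q ^ (n * (n - 1)) * q ^ (2 * n) := by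
        rw [← pow_add]
        congr 1
        cases n with
        | zero => rfl
        | succ m => rw [Nat.add_sub_cancel]; ring
      rw [e1, e2, e3, e4, qqPoch_succ q k, qqPoch_succ q (n + k + 1 + n)]
      have h1 := qqPoch_ne_zero hq1 k
      have h2 := qqPoch_ne_zero hq1 (n + k + 1 + n)
      have h3 := one_sub_pow_ne_zero hq1 (m := 2 * k + 2) (by omega)
      have h4 := one_sub_pow_ne_zero hq1 (m := 2 * (n + k + 1 + n) + 2) (by omega)
      have hEn := hE n
      have hlin : q ^ (2 * n) *
          ((1 - z * q ^ (2 * (n + k + 1) + 1)) * (1 - z⁻¹ * q ^ (2 * (n + k + 1) + 1)))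
          = q ^ (2 * n) * ((1 - q ^ (2 * k + 2)) * (1 - q ^ (2 * (n + k + 1 + n) + 2)))
            + q ^ (2 * (n + k + 1)) *
              ((1 - z * q ^ (2 * n + 1)) * (1 - z⁻¹ * q ^ (2 * n + 1))) := by
        field_simp
        ring
      generalize (1 - z * q ^ (2 * n + 1)) * (1 - z⁻¹ * q ^ (2 * n + 1)) = E at *
      generalize (1 - z * q ^ (2 * (n + k + 1) + 1)) * (1 - z⁻¹ * q ^ (2 * (n + k + 1) + 1)) = F
        at *
      generalize 1 - q ^ (2 * k + 2) = u at *
      generalize 1 - q ^ (2 * (n + k + 1 + n) + 2) = v at *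
      generalize qqPoch q k = B at *
      generalize qqPoch q (n + k + 1 + n) = A at *
      generalize 1 - q ^ (4 * n + 2) = w at *
      generalize q ^ (2 * n) = x at *
      generalize q ^ (2 * (n + k + 1)) = y at *
      generalize q ^ (n * (n - 1)) = r at *
      generalize (-1 : ℂ) ^ n = s at *
      field_simp
      linear_combination r * s * w * hlin
    rw [sum_range_succ, sum_congr rfl key, sum_add_distrib, ← mul_sum, add_assoc, add_eq_left]
    have hlast := sum_aux_eq_zero hq1 (N + 1) (by omega)
    rw [sum_range_succ] at hlast
    have hEN := hE (N + 1)
    have e4 : q ^ ((N + 1) ^ 2 + (N + 1)) = q ^ ((N + 1) * (N + 1 - 1)) * q ^ (2 * (N + 1)) := by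
      rw [← pow_add, Nat.add_sub_cancel]
      ring
    rw [e4]
    generalize (1 - z * q ^ (2 * (N + 1) + 1)) * (1 - z⁻¹ * q ^ (2 * (N + 1) + 1)) = E at *
    have hcancel (a b : ℂ) : a / E * b * E = a * b := by field_simp
    rw [hcancel]
    linear_combination q ^ (2 * (N + 1)) * hlast

lemma multipliable_qPochInf (a : ℂ) {q : ℂ} (hq1 : ‖q‖ < 1) :
    Multipliable fun j : ℕ => 1 - a * q ^ j := by
  have h := multipliable_one_add_of_summable (f := fun j : ℕ => -(a * q ^ j))
    (by simpa using (summable_geometric_of_lt_one (norm_nonneg q) hq1).mul_left ‖a‖)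
  simpa [sub_eq_add_neg] using h

lemma qPochInf_ne_zero_s4 {a q : ℂ} (hq1 : ‖q‖ < 1) (h : ∀ j : ℕ, 1 - a * q ^ j ≠ 0) :
    qPochInf a q ≠ 0 := by
  have := tprod_one_add_ne_zero_of_summable (f := fun j : ℕ => -(a * q ^ j))
    (by simpa [sub_eq_add_neg] using h)
    (by simpa using (summable_geometric_of_lt_one (norm_nonneg q) hq1).mul_left ‖a‖)
  simpa [qPochInf, sub_eq_add_neg] using this

lemma tendsto_qPochInf (a : ℂ) {q : ℂ} (hq1 : ‖q‖ < 1) :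
    Tendsto (fun m => ∏ j ∈ range m, (1 - a * q ^ j)) atTop (𝓝 (qPochInf a q)) :=
  (multipliable_qPochInf a hq1).tendsto_prod_tprod_nat

/-- `(q;q)_∞ = (q;q²)_∞ (q²;q²)_∞`. -/
lemma qPochInf_even_odd {q : ℂ} (hQ1 : ‖q ^ 2‖ < 1) :
    qPochInf q q = qPochInf q (q ^ 2) * qPochInf (q ^ 2) (q ^ 2) := by
  have e1 : (fun k : ℕ => 1 - q * q ^ (2 * k)) = fun k => 1 - q * (q ^ 2) ^ k := by
    funext k; ring
  have e2 : (fun k : ℕ => 1 - q * q ^ (2 * k + 1)) = fun k => 1 - q ^ 2 * (q ^ 2) ^ k := by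
    funext k; ring
  have h := tprod_even_mul_odd (f := fun j : ℕ => 1 - q * q ^ j)
    (by rw [e1]; exact multipliable_qPochInf q hQ1)
    (by rw [e2]; exact multipliable_qPochInf (q ^ 2) hQ1)
  rw [e1, e2] at h
  exact h.symm

lemma exists_norm_le_of_tendsto {u : ℕ → ℂ} {l : ℂ} (h : Tendsto u atTop (𝓝 l)) :
    ∃ C : ℝ, ∀ n, ‖u n‖ ≤ C := by
  obtain ⟨C, hC⟩ := (Metric.isBounded_range_of_tendsto u h).exists_norm_le
  exact ⟨C, fun n => hC _ ⟨n, rfl⟩⟩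

lemma summable_terms {q z : ℂ} (hq1 : ‖q‖ < 1) :
    Summable (fun n : ℕ =>
      ‖(-1 : ℂ) ^ n * q ^ (n ^ 2 + n) * (1 - q ^ (4 * n + 2)) /
        ((1 - z * q ^ (2 * n + 1)) * (1 - z⁻¹ * q ^ (2 * n + 1)))‖) := by
  have hp : ∀ a b : ℕ, 0 < a → Tendsto (fun n : ℕ => q ^ (a * n + b)) atTop (𝓝 0) := fun a b ha =>
    (tendsto_pow_atTop_nhds_zero_of_norm_lt_one hq1).comp
      (tendsto_atTop_mono (fun n => by simp only [id]; nlinarith) tendsto_id)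
  have hlim : Tendsto (fun n : ℕ => (1 - q ^ (4 * n + 2)) /
      ((1 - z * q ^ (2 * n + 1)) * (1 - z⁻¹ * q ^ (2 * n + 1)))) atTop
      (𝓝 ((1 - 0) / ((1 - z * 0) * (1 - z⁻¹ * 0)))) := by
    refine ((hp 4 2 (by omega)).const_sub 1).div
      (((((hp 2 1 (by omega)).const_mul z).const_sub 1)).mul
        (((hp 2 1 (by omega)).const_mul z⁻¹).const_sub 1)) (by simp)
  obtain ⟨C, hC⟩ := exists_norm_le_of_tendsto hlim
  refine Summable.of_nonneg_of_le (fun n => norm_nonneg _) (fun n => ?_)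
    ((summable_geometric_of_lt_one (norm_nonneg q) hq1).mul_right C)
  rw [mul_div_assoc, norm_mul, norm_mul, norm_pow, norm_neg, norm_one, one_pow, one_mul, norm_pow]
  gcongr ?_ * ?_
  · exact pow_le_pow_of_le_one (norm_nonneg q) hq1.le (Nat.le_add_left n (n ^ 2))
  · exact hC n

/-- `1/((zq;q^2)_∞ (q/z;q^2)_∞ (q;q^2)_∞)
    = (1/((q;q)_∞ (q^2;q^2)_∞)) Σ_{n≥0} (−1)^n q^{n^2+n} (1−q^{4n+2})/((1−zq^{2n+1})(1−z⁻¹q^{2n+1}))`,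
    with the right-hand series converging absolutely. -/
theorem statement4 (q z : ℂ) (hq0 : 0 < ‖q‖) (hq1 : ‖q‖ < 1) (hz : z ≠ 0)
    (hzq : ∀ j : ℕ, z ≠ q ^ (2 * j + 1) ∧ z⁻¹ ≠ q ^ (2 * j + 1)) :
    Summable (fun n : ℕ =>
      ‖(-1 : ℂ) ^ n * q ^ (n ^ 2 + n) * (1 - q ^ (4 * n + 2)) /
        ((1 - z * q ^ (2 * n + 1)) * (1 - z⁻¹ * q ^ (2 * n + 1)))‖) ∧
    1 / (qPochInf (z * q) (q ^ 2) * qPochInf (q / z) (q ^ 2) * qPochInf q (q ^ 2))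
      = 1 / (qPochInf q q * qPochInf (q ^ 2) (q ^ 2)) *
        ∑' n : ℕ, (-1 : ℂ) ^ n * q ^ (n ^ 2 + n) * (1 - q ^ (4 * n + 2)) /
          ((1 - z * q ^ (2 * n + 1)) * (1 - z⁻¹ * q ^ (2 * n + 1))) := by
  have hQ1 : ‖q ^ 2‖ < 1 := by
    rw [norm_pow]
    exact pow_lt_one₀ (norm_nonneg q) hq1 two_ne_zero
  have hS := summable_terms (z := z) hq1
  refine ⟨hS, ?_⟩
  have hE1 : ∀ n : ℕ, 1 - z * q ^ (2 * n + 1) ≠ 0 := fun n h =>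
    (hzq n).2 (inv_eq_of_mul_eq_one_right (sub_eq_zero.mp h).symm)
  have hE2 : ∀ n : ℕ, 1 - z⁻¹ * q ^ (2 * n + 1) ≠ 0 := fun n h => by
    have h1 := sub_eq_zero.mp h
    rw [eq_comm, inv_mul_eq_one₀ hz] at h1
    exact (hzq n).1 h1
  have hP := tendsto_qPochInf (q ^ 2) hQ1
  have hA := tendsto_qPochInf (z * q) hQ1
  have hB := tendsto_qPochInf (q / z) hQ1
  have eA : ∀ j : ℕ, 1 - z * q * (q ^ 2) ^ j = 1 - z * q ^ (2 * j + 1) := fun j => by ring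
  have eB : ∀ j : ℕ, 1 - q / z * (q ^ 2) ^ j = 1 - z⁻¹ * q ^ (2 * j + 1) := fun j => by
    rw [div_eq_mul_inv]; ring
  have hA0 : qPochInf (z * q) (q ^ 2) ≠ 0 :=
    qPochInf_ne_zero_s4 hQ1 fun j => by rw [eA]; exact hE1 j
  have hB0 : qPochInf (q / z) (q ^ 2) ≠ 0 :=
    qPochInf_ne_zero_s4 hQ1 fun j => by rw [eB]; exact hE2 j
  have hP0 : qPochInf (q ^ 2) (q ^ 2) ≠ 0 := qPochInf_ne_zero_s4 hQ1 fun j => by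
    rw [← pow_succ']; exact one_sub_pow_ne_zero hQ1 (by omega)
  have hO0 : qPochInf q (q ^ 2) ≠ 0 := qPochInf_ne_zero_s4 hQ1 fun j => by
    rw [← pow_mul, ← pow_succ']; exact one_sub_pow_ne_zero hq1 (by omega)
  change Tendsto (qqPoch q) atTop _ at hP
  have hPinv : Tendsto (fun m => (qqPoch q m)⁻¹) atTop (𝓝 (qPochInf (q ^ 2) (q ^ 2))⁻¹) :=
    hP.inv₀ hP0
  obtain ⟨C, hC⟩ := exists_norm_le_of_tendsto hPinv
  have hC0 : 0 ≤ C := (norm_nonneg _).trans (hC 0)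
  have hprod : Tendsto (fun N : ℕ => (∏ n ∈ range (N + 1),
      ((1 - z * q ^ (2 * n + 1)) * (1 - z⁻¹ * q ^ (2 * n + 1))))⁻¹) atTop
      (𝓝 (qPochInf (z * q) (q ^ 2) * qPochInf (q / z) (q ^ 2))⁻¹) := by
    refine Tendsto.inv₀ ?_ (mul_ne_zero hA0 hB0)
    have h := (hA.mul hB).comp (tendsto_add_atTop_nat 1)
    simpa only [eA, eB, ← prod_mul_distrib, Function.comp_def] using h
  simp_rw [← partial_fractions_s4 hq1 hz (fun n => mul_ne_zero (hE1 n) (hE2 n))] at hprod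
  set t : ℕ → ℂ := fun n => (-1 : ℂ) ^ n * q ^ (n ^ 2 + n) * (1 - q ^ (4 * n + 2)) /
    ((1 - z * q ^ (2 * n + 1)) * (1 - z⁻¹ * q ^ (2 * n + 1))) with ht
  have hsum : Tendsto (fun N : ℕ => ∑' n, (if n ∈ range (N + 1) then
      t n * (qqPoch q (N + 1 + n) * qqPoch q (N - n))⁻¹ else 0)) atTop
      (𝓝 (∑' n, t n * (qPochInf (q ^ 2) (q ^ 2) * qPochInf (q ^ 2) (q ^ 2))⁻¹)) := by
    refine tendsto_tsum_of_dominated_convergence (hS.mul_right (C * C)) (fun n => ?_)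
      (Eventually.of_forall fun N n => ?_)
    · have h1 : Tendsto (fun N : ℕ => N + 1 + n) atTop atTop :=
        tendsto_atTop_mono (fun N => by simp only [id]; omega) tendsto_id
      have h2 : Tendsto (fun N : ℕ => N - n) atTop atTop := tendsto_sub_atTop_nat n
      have h3 := (((hP.comp h1).mul (hP.comp h2)).inv₀ (mul_ne_zero hP0 hP0)).const_mul (t n)
      refine h3.congr' ?_
      filter_upwards [eventually_ge_atTop n] with N hN
      rw [if_pos (mem_range.mpr (by omega))]
      rfl
    · split_ifs
      · rw [norm_mul, mul_inv, norm_mul]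
        exact mul_le_mul_of_nonneg_left
          (mul_le_mul (hC _) (hC _) (norm_nonneg _) hC0) (norm_nonneg _)
      · rw [norm_zero]
        positivity
  have hlim : (qPochInf (z * q) (q ^ 2) * qPochInf (q / z) (q ^ 2))⁻¹
      = (∑' n, t n) * (qPochInf (q ^ 2) (q ^ 2) * qPochInf (q ^ 2) (q ^ 2))⁻¹ := by
    rw [← tsum_mul_right]
    refine tendsto_nhds_unique hprod (hsum.congr fun N => ?_)
    rw [tsum_eq_sum (s := range (N + 1)) (fun n hn => if_neg hn)]
    exact sum_congr rfl fun n hn => if_pos hn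
  rw [qPochInf_even_odd hQ1, one_div, mul_inv, hlim]
  field_simp
end
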